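/- Let G be a k-regular finite simple graph on n vertices (not necessarily connected), where k ≥ 1 is odd. Then G is (nk/2 − 1)-approximately magic; that is, there exists a bijection f from the edge set of G to {1, 2, ..., nk/2} such that the difference between the largest vertex sum and the smallest vertex sum is at most nk/2 − 1. -/

import Mathlib

/-- The vertex sum at `v` under an edge labeling `f`: the sum of the labels of all
edges incident with `v`. -/
noncomputable def vertexSum {V : Type*} [Finite V] (G : SimpleGraph V)
    (f : Sym2 V → ℕ) (v : V) : ℕ :=
  ∑ e ∈ (G.incidenceSet v).toFinite.toFinset, f e

/-- A graph is antimagic if there is a bijection from its edge set to `{1, ..., m}`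
(`m` = number of edges) such that all vertex sums are pairwise distinct. -/
def IsAntimagic {V : Type*} [Finite V] (G : SimpleGraph V) : Prop :=
  ∃ f : Sym2 V → ℕ,
    Set.BijOn f G.edgeSet (Set.Icc 1 (Nat.card G.edgeSet)) ∧
    ∀ u v : V, u ≠ v → vertexSum G f u ≠ vertexSum G f v

/-!
Call the edges of `G` decomposed into trails if they are listed, each once, by a list of walks.
Walks of such a decomposition that share an endpoint can be glued, so in a decomposition with the
fewest walks no vertex occurs more than twice as an endpoint. When all degrees are odd, parity
then makes every vertex an endpoint exactly once, and there are `n / 2` walks.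

Label the edges along the walks, one walk after the other, by `1, m, 2, m - 1, …`. Consecutive
labels add up to `m + 1` or `m + 2`, and at a vertex of degree `k = 2 t + 1` all edges but the one
at which a walk ends come in `t` consecutive pairs. It remains to bound that last label. If the
graph is `k`-regular then `m = k n / 2`, so some walk has length at least `k`, and it may be taken
to come first. Its first edge has label `1`, and every later end of a walk comes after the labels
`m, m - 1, …, m - t + 1` have been used. Hence all end labels lie in `[1, m - t]`, the vertex sums
in `[1 + t (m + 1), m - t + t (m + 2)]`, and this interval has length `m - 1`.
-/

/-- Bounds on a list of labels that comes from `d` single labels in `[lo, hi]` together with some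
number of pairs, each with sum in `[A, B]`. Only the resulting bounds on length and sum are
recorded, not the pairing itself. -/
def PairedBounds (lo hi A B d : ℕ) (l : List ℕ) : Prop :=
  ∃ t, l.length = d + 2 * t ∧ l.sum ∈ Set.Icc (d * lo + t * A) (d * hi + t * B)

namespace PairedBounds

variable {lo hi A B d d' a b : ℕ} {l l' : List ℕ}

theorem nil : PairedBounds lo hi A B 0 [] := ⟨0, by simp⟩

theorem singleton (ha : a ∈ Set.Icc lo hi) : PairedBounds lo hi A B 1 [a] :=
  ⟨0, by simpa using ha⟩

theorem pair (hab : a + b ∈ Set.Icc A B) : PairedBounds lo hi A B 0 [a, b] :=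
  ⟨1, by simpa using hab⟩

theorem append (h : PairedBounds lo hi A B d l) (h' : PairedBounds lo hi A B d' l') :
    PairedBounds lo hi A B (d + d') (l ++ l') := by
  obtain ⟨t, hlen, hlow, hupp⟩ := h
  obtain ⟨t', hlen', hlow', hupp'⟩ := h'
  refine ⟨t + t', ?_, ?_, ?_⟩ <;> simp only [List.length_append, List.sum_append, add_mul] <;> lia

end PairedBounds

section Zigzag

/-- The `i`-th term, counted from `0`, of the labels `1, m, 2, m - 1, …`. It is meant for `i < m`,
where the subtraction does not truncate. -/
def zigzag (m i : ℕ) : ℕ := if Even i then i / 2 + 1 else m - i / 2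

theorem zigzag_add_zigzag_succ_mem_Icc {m i : ℕ} (hi : i < m) :
    zigzag m i + zigzag m (i + 1) ∈ Set.Icc (m + 1) (m + 2) := by
  simp only [zigzag, Nat.even_iff, Set.mem_Icc]
  split_ifs <;> lia

theorem zigzag_mem_Icc_sub {m i t : ℕ} (hi : i < m) (ht : t < m) (hit : i = 0 ∨ 2 * t ≤ i) :
    zigzag m i ∈ Set.Icc 1 (m - t) := by
  simp only [zigzag, Nat.even_iff, Set.mem_Icc]
  split_ifs <;> lia

theorem zigzag_injOn (m : ℕ) : Set.InjOn (zigzag m) (Set.Iio m) := by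
  intro i hi j hj hij
  simp only [zigzag, Nat.even_iff, Set.mem_Iio] at hi hj hij
  split_ifs at hij <;> lia

theorem zigzag_surjOn (m : ℕ) : Set.SurjOn (zigzag m) (Set.Iio m) (Set.Icc 1 m) := by
  rintro y ⟨hy, hym⟩
  by_cases hsmall : 2 * (y - 1) < m
  · exact ⟨2 * (y - 1), hsmall, by simp [zigzag, Nat.sub_add_cancel hy]⟩
  · refine ⟨2 * (m - y) + 1, by simp only [Set.mem_Iio]; lia, ?_⟩
    simp only [zigzag, Nat.even_iff]
    split_ifs <;> lia

theorem zigzag_bijOn (m : ℕ) : Set.BijOn (zigzag m) (Set.Iio m) (Set.Icc 1 m) where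
  left i hi := zigzag_mem_Icc_sub (t := 0) hi (by rw [Set.mem_Iio] at hi; lia) (by simp)
  right := ⟨zigzag_injOn m, zigzag_surjOn m⟩

variable {α : Type*} [DecidableEq α] {F : List α}

/-- The labeling of the entries of `F`, in the order of their first occurrence, by
`1, m, 2, m - 1, …`, where `m` is the length of `F`. -/
def zigzagLabel (F : List α) (e : α) : ℕ := zigzag F.length (F.idxOf e)

theorem bijOn_idxOf (hF : F.Nodup) : Set.BijOn F.idxOf {e | e ∈ F} (Set.Iio F.length) where
  left _ he := List.idxOf_lt_length_of_mem he
  right := ⟨fun _ he _ _ h => (List.idxOf_inj he).1 h,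
    fun i hi => ⟨F[i]'hi, List.getElem_mem hi, hF.idxOf_getElem i hi⟩⟩

theorem bijOn_zigzagLabel (hF : F.Nodup) :
    Set.BijOn (zigzagLabel F) {e | e ∈ F} (Set.Icc 1 F.length) :=
  (zigzag_bijOn F.length).comp (bijOn_idxOf hF)

theorem zigzagLabel_mem_Icc_sub {e : α} {t : ℕ} (he : e ∈ F) (ht : t < F.length)
    (het : F.idxOf e = 0 ∨ 2 * t ≤ F.idxOf e) : zigzagLabel F e ∈ Set.Icc 1 (F.length - t) :=
  zigzag_mem_Icc_sub (List.idxOf_lt_length_of_mem he) ht het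

theorem isChain_zigzagLabel (hF : F.Nodup) : F.IsChain fun e e' =>
    zigzagLabel F e + zigzagLabel F e' ∈ Set.Icc (F.length + 1) (F.length + 2) := by
  refine List.isChain_iff_getElem.2 fun i hi => ?_
  simpa only [zigzagLabel, hF.idxOf_getElem] using zigzag_add_zigzag_succ_mem_Icc (by lia)

end Zigzag

variable {V : Type*} {G : SimpleGraph V}

/-- A walk in `G` bundled with its endpoints, so that walks with different endpoints can be put
in one list. -/
abbrev FreeWalk (G : SimpleGraph V) := Σ u w : V, G.Walk u w

namespace FreeWalk

/-- The edges traversed by a list of walks, one walk after the other. -/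
def edgeSeq (L : List (FreeWalk G)) : List (Sym2 V) := L.flatMap fun p => p.2.2.edges

/-- The endpoints of a list of walks; a closed walk contributes its endpoint twice. -/
def endpoints (L : List (FreeWalk G)) : List V := L.flatMap fun p => [p.1, p.2.1]

theorem edgeSeq_cons (p : FreeWalk G) (L : List (FreeWalk G)) :
    edgeSeq (p :: L) = p.2.2.edges ++ edgeSeq L := List.flatMap_cons

theorem endpoints_cons (p : FreeWalk G) (L : List (FreeWalk G)) :
    endpoints (p :: L) = [p.1, p.2.1] ++ endpoints L := List.flatMap_cons

theorem length_endpoints (L : List (FreeWalk G)) : (endpoints L).length = 2 * L.length := by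
  simp [endpoints, List.length_flatMap, mul_comm]

theorem length_edgeSeq_le {L : List (FreeWalk G)} {c : ℕ} (hL : ∀ p ∈ L, p.2.2.length ≤ c) :
    (edgeSeq L).length ≤ L.length * c := by
  simpa [edgeSeq, List.length_flatMap] using
    List.sum_le_card_nsmul (L.map fun p => p.2.2.length) c (List.forall_mem_map.2 hL)

theorem exists_edgeSeq_eq {l : List (Sym2 V)} (hl : ∀ e ∈ l, e ∈ G.edgeSet) :
    ∃ L : List (FreeWalk G), (∀ p ∈ L, 0 < p.2.2.length) ∧ edgeSeq L = l := by
  induction l with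
  | nil => exact ⟨[], by simp [edgeSeq]⟩
  | cons e l ih =>
    obtain ⟨he, hl⟩ := List.forall_mem_cons.1 hl
    obtain ⟨L, hpos, hL⟩ := ih hl
    induction e with
    | h x y =>
      have hxy : G.Adj x y := he
      exact ⟨⟨x, y, hxy.toWalk⟩ :: L, by simpa using hpos, by simp [edgeSeq_cons, hL]⟩

theorem exists_perm_cons_of_mem_endpoints {L : List (FreeWalk G)} {v : V} (hv : v ∈ endpoints L) :
    ∃ p R, v ∈ [p.1, p.2.1] ∧ L.Perm (p :: R) := by
  classical
  obtain ⟨p, hp, hvp⟩ := List.mem_flatMap.1 hv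
  exact ⟨p, L.erase p, hvp, List.perm_cons_erase hp⟩

theorem exists_walk_from_endpoint {p : FreeWalk G} {v : V} (hv : v ∈ [p.1, p.2.1]) :
    ∃ (w : V) (q : G.Walk v w), q.edges.Perm p.2.2.edges := by
  obtain ⟨u, w, p⟩ := p
  obtain rfl | rfl : v = u ∨ v = w := by simpa using hv
  · exact ⟨w, p, .refl _⟩
  · exact ⟨u, p.reverse, by simp⟩

theorem exists_edges_perm_append {p q : FreeWalk G} {v : V} (hp : v ∈ [p.1, p.2.1])
    (hq : v ∈ [q.1, q.2.1]) :
    ∃ r : FreeWalk G, r.2.2.edges.Perm (p.2.2.edges ++ q.2.2.edges) := by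
  obtain ⟨u, p', hp'⟩ := exists_walk_from_endpoint hp
  obtain ⟨w, q', hq'⟩ := exists_walk_from_endpoint hq
  refine ⟨⟨u, w, p'.reverse.append q'⟩, ?_⟩
  simpa using ((List.reverse_perm _).trans hp').append hq'

theorem two_mul_length_eq_card_of_count_endpoints_eq_one [DecidableEq V] {L : List (FreeWalk G)}
    (hL : ∀ v, (endpoints L).count v = 1) : 2 * L.length = Nat.card V := by
  have hnodup : (endpoints L).Nodup := List.nodup_iff_count_le_one.2 fun v => (hL v).le
  have hmem (v : V) : v ∈ endpoints L := List.count_pos_iff.1 (hL v ▸ one_pos)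
  rw [← length_endpoints, ← Nat.card_congr (hnodup.getEquivOfForallMemList _ hmem), Nat.card_fin]

end FreeWalk

open FreeWalk

section LabelsAt

variable [DecidableEq V]

/-- The labels under `f` of those edges of the list `l` that are incident with `v`. -/
def labelsAt (f : Sym2 V → ℕ) (v : V) (l : List (Sym2 V)) : List ℕ :=
  (l.filter (v ∈ ·)).map f

variable {f : Sym2 V → ℕ} {v : V} {lo hi A B : ℕ}

theorem labelsAt_append (l l' : List (Sym2 V)) :
    labelsAt f v (l ++ l') = labelsAt f v l ++ labelsAt f v l' := by
  simp [labelsAt]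

theorem labelsAt_cons (e : Sym2 V) (l : List (Sym2 V)) :
    labelsAt f v (e :: l) = (if v ∈ e then [f e] else []) ++ labelsAt f v l := by
  simp only [labelsAt, List.filter_cons, decide_eq_true_eq]
  split_ifs <;> simp

/-- Here `e` plays the role of the edge traversed just before `p`: when `p` starts at `v`, the
label of `e` still waits for its partner, which is the label of the first edge of `p`. -/
theorem pairedBounds_append_labelsAt_edges {x w : V} (p : G.Walk x w) (e : Sym2 V)
    (hchain : (e :: p.edges).IsChain fun e e' => f e + f e' ∈ Set.Icc A B)
    (hlast : ∀ e' ∈ (e :: p.edges).getLast?, f e' ∈ Set.Icc lo hi) :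
    PairedBounds lo hi A B ([w].count v)
      ((if x = v then [f e] else []) ++ labelsAt f v p.edges) := by
  induction p generalizing e with
  | @nil x =>
    have hsingle := PairedBounds.singleton (A := A) (B := B) (hlast e (by simp))
    by_cases hx : x = v
    · simpa [hx, labelsAt] using hsingle
    · simpa [hx, labelsAt] using PairedBounds.nil
  | @cons x y w h p ih =>
    rw [SimpleGraph.Walk.edges_cons] at hchain hlast
    obtain ⟨hpair, hchain⟩ := List.isChain_cons_cons.1 hchain
    have hrest := ih s(x, y) hchain (by simpa using hlast)
    by_cases hx : x = v
    · have hy : y ≠ v := hx ▸ h.ne'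
      simpa [hx, hy, labelsAt_cons] using (PairedBounds.pair (hx ▸ hpair)).append hrest
    · simpa [hx, Ne.symm hx, labelsAt_cons, eq_comm (a := v)] using hrest

theorem pairedBounds_labelsAt_edges {u w : V} (p : G.Walk u w) (hp : 0 < p.length)
    (hchain : p.edges.IsChain fun e e' => f e + f e' ∈ Set.Icc A B)
    (hhead : ∀ e ∈ p.edges.head?, f e ∈ Set.Icc lo hi)
    (hlast : ∀ e ∈ p.edges.getLast?, f e ∈ Set.Icc lo hi) :
    PairedBounds lo hi A B ([u, w].count v) (labelsAt f v p.edges) := by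
  cases p with
  | nil => simp at hp
  | @cons _ x _ h p =>
    have hrest := pairedBounds_append_labelsAt_edges (v := v) p s(u, x) hchain hlast
    by_cases hu : u = v
    · have hx : x ≠ v := hu ▸ h.ne'
      have hsingle := PairedBounds.singleton (A := A) (B := B) (hhead s(u, x) (by simp))
      simpa [hu, hx, labelsAt_cons, List.count_cons, add_comm] using hsingle.append hrest
    · simpa [hu, Ne.symm hu, labelsAt_cons, List.count_cons, eq_comm (a := v)] using hrest

theorem pairedBounds_labelsAt_edgeSeq (L : List (FreeWalk G)) (hpos : ∀ p ∈ L, 0 < p.2.2.length)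
    (hchain : (edgeSeq L).IsChain fun e e' => f e + f e' ∈ Set.Icc A B)
    (hhead : ∀ p ∈ L, ∀ e ∈ p.2.2.edges.head?, f e ∈ Set.Icc lo hi)
    (hlast : ∀ p ∈ L, ∀ e ∈ p.2.2.edges.getLast?, f e ∈ Set.Icc lo hi) :
    PairedBounds lo hi A B ((endpoints L).count v) (labelsAt f v (edgeSeq L)) := by
  induction L with
  | nil => exact PairedBounds.nil
  | cons p L ih =>
    rw [List.forall_mem_cons] at hpos hhead hlast
    rw [edgeSeq_cons] at hchain ⊢
    rw [endpoints_cons, List.count_append, labelsAt_append]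
    exact (pairedBounds_labelsAt_edges p.2.2 hpos.1 hchain.left_of_append hhead.1 hlast.1).append
      (ih hpos.2 hchain.right_of_append hhead.2 hlast.2)

end LabelsAt

/-- A decomposition of the edges of `G` into nonempty trails. That each walk is a trail is part of
`nodup`, which also says that different walks share no edge. -/
structure IsTrailDecomposition (G : SimpleGraph V) (L : List (FreeWalk G)) : Prop where
  length_pos : ∀ p ∈ L, 0 < p.2.2.length
  nodup : (edgeSeq L).Nodup
  mem_edgeSeq : ∀ {e}, e ∈ edgeSeq L ↔ e ∈ G.edgeSet

namespace IsTrailDecomposition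

variable {L L' : List (FreeWalk G)}

theorem exists_of_finite [Finite V] (G : SimpleGraph V) : ∃ L, IsTrailDecomposition G L := by
  have hE := G.edgeSet.toFinite
  obtain ⟨L, hpos, hL⟩ := exists_edgeSeq_eq (l := hE.toFinset.toList) (G := G) (by simp)
  exact ⟨L, hpos, hL ▸ Finset.nodup_toList _, by simp [hL]⟩

theorem of_edgeSeq_perm (h : IsTrailDecomposition G L) (hpos : ∀ p ∈ L', 0 < p.2.2.length)
    (hperm : (edgeSeq L').Perm (edgeSeq L)) : IsTrailDecomposition G L' :=
  ⟨hpos, hperm.nodup_iff.2 h.nodup, by simp [hperm.mem_iff, h.mem_edgeSeq]⟩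

theorem perm (h : IsTrailDecomposition G L) (hperm : L.Perm L') : IsTrailDecomposition G L' :=
  h.of_edgeSeq_perm (fun _ hp => h.length_pos _ (hperm.mem_iff.2 hp)) (hperm.symm.flatMap_right _)

theorem glue {p q r : FreeWalk G} (h : IsTrailDecomposition G (p :: q :: L))
    (hr : r.2.2.edges.Perm (p.2.2.edges ++ q.2.2.edges)) : IsTrailDecomposition G (r :: L) := by
  have hlen : r.2.2.length = p.2.2.length + q.2.2.length := by simpa using hr.length_eq
  have hpos := h.length_pos
  simp only [List.forall_mem_cons] at hpos
  refine h.of_edgeSeq_perm (List.forall_mem_cons.2 ⟨by lia, hpos.2.2⟩) ?_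
  simpa only [edgeSeq_cons, List.append_assoc] using hr.append_right (edgeSeq L)

theorem length_edgeSeq (h : IsTrailDecomposition G L) :
    (edgeSeq L).length = Nat.card G.edgeSet := by
  classical
  have hset : G.edgeSet = (edgeSeq L).toFinset := by ext e; simp [h.mem_edgeSeq]
  rw [← List.toFinset_card_of_nodup h.nodup, Nat.card_coe_set_eq, hset, Set.ncard_coe_finset]

variable [DecidableEq V]

theorem exists_length_lt_of_two_lt_count (h : IsTrailDecomposition G L) {v : V}
    (hv : 2 < (endpoints L).count v) : ∃ L', IsTrailDecomposition G L' ∧ L'.length < L.length := by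
  obtain ⟨p, R, hp, hLp⟩ := exists_perm_cons_of_mem_endpoints
    (List.count_pos_iff.1 (zero_lt_two.trans hv))
  have hcount : (endpoints L).count v = [p.1, p.2.1].count v + (endpoints R).count v := by
    rw [← List.count_append, ← endpoints_cons]
    exact (hLp.flatMap_right _).count_eq v
  have hp_le : [p.1, p.2.1].count v ≤ 2 := List.count_le_length
  obtain ⟨q, S, hq, hRq⟩ := exists_perm_cons_of_mem_endpoints
    (List.count_pos_iff.1 (show 0 < (endpoints R).count v by lia))
  obtain ⟨r, hr⟩ := exists_edges_perm_append hp hq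
  have hL := hLp.trans (hRq.cons p)
  exact ⟨r :: S, (h.perm hL).glue hr, by simp [hL.length_eq]⟩

theorem exists_count_endpoints_le_two [Finite V] (G : SimpleGraph V) :
    ∃ L, IsTrailDecomposition G L ∧ ∀ v, (endpoints L).count v ≤ 2 := by
  obtain ⟨L, hL, hmin⟩ := exists_minimalFor_of_wellFoundedLT _ List.length (exists_of_finite G)
  refine ⟨L, hL, fun v => not_lt.1 fun hv => ?_⟩
  obtain ⟨L', hL', hlt⟩ := hL.exists_length_lt_of_two_lt_count hv
  exact (hmin hL' hlt.le).not_gt hlt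

theorem toFinset_filter_mem [Finite V] (h : IsTrailDecomposition G L) (v : V) :
    ((edgeSeq L).filter (v ∈ ·)).toFinset = (G.incidenceSet v).toFinite.toFinset := by
  ext e
  simp [h.mem_edgeSeq, SimpleGraph.incidenceSet]

theorem sum_labelsAt [Finite V] (h : IsTrailDecomposition G L) (f : Sym2 V → ℕ) (v : V) :
    (labelsAt f v (edgeSeq L)).sum = vertexSum G f v := by
  rw [labelsAt, vertexSum, ← h.toFinset_filter_mem, List.sum_toFinset _ (h.nodup.filter _)]

theorem length_labelsAt [Finite V] (h : IsTrailDecomposition G L) (f : Sym2 V → ℕ) (v : V) :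
    (labelsAt f v (edgeSeq L)).length = Nat.card (G.neighborSet v) := by
  rw [labelsAt, List.length_map, ← List.toFinset_card_of_nodup (h.nodup.filter _),
    h.toFinset_filter_mem, ← Nat.card_eq_card_finite_toFinset]
  exact Nat.card_congr (G.incidenceSetEquivNeighborSet v)

theorem exists_card_neighborSet_eq [Finite V] (h : IsTrailDecomposition G L) (v : V) :
    ∃ t, Nat.card (G.neighborSet v) = (endpoints L).count v + 2 * t := by
  obtain ⟨t, ht, -⟩ := pairedBounds_labelsAt_edgeSeq (f := 0) (v := v) (lo := 0) (hi := 0) (A := 0)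
    (B := 0) L h.length_pos (List.isChain_iff_getElem.2 <| by simp) (by simp) (by simp)
  exact ⟨t, by rw [← ht, h.length_labelsAt]⟩

theorem exists_count_endpoints_eq_one [Finite V]
    (hodd : ∀ v, Odd (Nat.card (G.neighborSet v))) :
    ∃ L, IsTrailDecomposition G L ∧ ∀ v, (endpoints L).count v = 1 := by
  obtain ⟨L, hL, hle⟩ := exists_count_endpoints_le_two G
  refine ⟨L, hL, fun v => ?_⟩
  obtain ⟨t, ht⟩ := hL.exists_card_neighborSet_eq v
  obtain ⟨s, hs⟩ := hodd v
  have := hle v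
  lia

theorem exists_two_mul_lt_length (h : IsTrailDecomposition G L)
    (hends : ∀ v, (endpoints L).count v = 1) {t : ℕ}
    (ht : t * Nat.card V < Nat.card G.edgeSet) : ∃ p ∈ L, 2 * t < p.2.2.length := by
  by_contra! hshort
  have hcover := length_edgeSeq_le hshort
  rw [h.length_edgeSeq] at hcover
  rw [← two_mul_length_eq_card_of_count_endpoints_eq_one hends] at ht
  lia

theorem exists_cons_two_mul_lt_length [Finite V] (hodd : ∀ v, Odd (Nat.card (G.neighborSet v)))
    {t : ℕ} (ht : t * Nat.card V < Nat.card G.edgeSet) :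
    ∃ p L, IsTrailDecomposition G (p :: L) ∧ (∀ v, (endpoints (p :: L)).count v = 1) ∧
      2 * t < p.2.2.length := by
  classical
  obtain ⟨L, hL, hends⟩ := exists_count_endpoints_eq_one hodd
  obtain ⟨p, hp, hpt⟩ := hL.exists_two_mul_lt_length hends ht
  have hperm := List.perm_cons_erase hp
  exact ⟨p, L.erase p, hL.perm hperm,
    fun v => ((hperm.symm.flatMap_right _).count_eq v).trans (hends v), hpt⟩

theorem idxOf_eq_zero_or_two_mul_le_of_mem_ends {p q : FreeWalk G} {e : Sym2 V} {t : ℕ}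
    (h : IsTrailDecomposition G (p :: L)) (ht : 2 * t < p.2.2.length) (hq : q ∈ p :: L)
    (he : e ∈ q.2.2.edges.head? ∨ e ∈ q.2.2.edges.getLast?) :
    (edgeSeq (p :: L)).idxOf e = 0 ∨ 2 * t ≤ (edgeSeq (p :: L)).idxOf e := by
  have hnodup := h.nodup
  rw [← SimpleGraph.Walk.length_edges] at ht
  rw [edgeSeq_cons] at hnodup ⊢
  obtain rfl | hqL := List.mem_cons.1 hq
  · obtain hfirst | hlast := he
    · obtain ⟨es, hes⟩ := List.head?_eq_some_iff.1 hfirst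
      exact .inl (by simp [hes])
    · obtain ⟨es, hes⟩ := List.getLast?_eq_some_iff.1 hlast
      simp only [hes, List.append_assoc, List.length_append, List.length_singleton,
        List.singleton_append] at hnodup ht ⊢
      have hnotMem : e ∉ es := fun hmem => (List.nodup_append.1 hnodup).2.2 e hmem e (by simp) rfl
      rw [List.idxOf_append_of_notMem hnotMem]
      lia
  · have heq : e ∈ q.2.2.edges := he.elim List.mem_of_mem_head? List.mem_of_mem_getLast?
    have hrest : e ∈ edgeSeq L := List.mem_flatMap.2 ⟨q, hqL, heq⟩
    have hnotMem : e ∉ p.2.2.edges :=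
      fun hmem => (List.nodup_append.1 hnodup).2.2 e hmem e hrest rfl
    rw [List.idxOf_append_of_notMem hnotMem]
    lia

theorem zigzagLabel_mem_Icc_of_mem_ends {p q : FreeWalk G} {e : Sym2 V} {t : ℕ}
    (h : IsTrailDecomposition G (p :: L)) (ht : 2 * t < p.2.2.length) (hq : q ∈ p :: L)
    (he : e ∈ q.2.2.edges.head? ∨ e ∈ q.2.2.edges.getLast?) :
    zigzagLabel (edgeSeq (p :: L)) e ∈ Set.Icc 1 ((edgeSeq (p :: L)).length - t) := by
  have hmem : e ∈ edgeSeq (p :: L) :=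
    List.mem_flatMap.2 ⟨q, hq, he.elim List.mem_of_mem_head? List.mem_of_mem_getLast?⟩
  have hlt : t < (edgeSeq (p :: L)).length := by
    rw [edgeSeq_cons, List.length_append, SimpleGraph.Walk.length_edges]
    lia
  exact zigzagLabel_mem_Icc_sub hmem hlt (h.idxOf_eq_zero_or_two_mul_le_of_mem_ends ht hq he)

end IsTrailDecomposition

theorem exists_bijOn_vertexSum_mem_Icc [Finite V] (hodd : ∀ v, Odd (Nat.card (G.neighborSet v)))
    {t : ℕ} (ht : t * Nat.card V < Nat.card G.edgeSet) :
    ∃ f : Sym2 V → ℕ, Set.BijOn f G.edgeSet (Set.Icc 1 (Nat.card G.edgeSet)) ∧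
      ∀ v, vertexSum G f v ∈ Set.Icc
        (1 + Nat.card (G.neighborSet v) / 2 * (Nat.card G.edgeSet + 1))
        (Nat.card G.edgeSet - t + Nat.card (G.neighborSet v) / 2 * (Nat.card G.edgeSet + 2)) := by
  classical
  obtain ⟨p, L, hL, hends, hpt⟩ := IsTrailDecomposition.exists_cons_two_mul_lt_length hodd ht
  have hset : {e | e ∈ edgeSeq (p :: L)} = G.edgeSet := Set.ext fun _ => hL.mem_edgeSeq
  refine ⟨zigzagLabel (edgeSeq (p :: L)), ?_, fun v => ?_⟩
  · simpa only [hset, hL.length_edgeSeq] using bijOn_zigzagLabel hL.nodup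
  · obtain ⟨s, hlen, hsum⟩ := pairedBounds_labelsAt_edgeSeq (v := v) _ hL.length_pos
      (isChain_zigzagLabel hL.nodup)
      (fun q hq e he => hL.zigzagLabel_mem_Icc_of_mem_ends hpt hq (.inl he))
      (fun q hq e he => hL.zigzagLabel_mem_Icc_of_mem_ends hpt hq (.inr he))
    rw [hends, hL.length_labelsAt] at hlen
    have hs : s = Nat.card (G.neighborSet v) / 2 := by lia
    simpa only [hends, hL.sum_labelsAt, hL.length_edgeSeq, one_mul, hs] using hsum

theorem two_mul_card_edgeSet [Finite V] {k : ℕ} (hreg : ∀ v, Nat.card (G.neighborSet v) = k) :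
    2 * Nat.card G.edgeSet = Nat.card V * k := by
  classical
  have := Fintype.ofFinite V
  have hdeg (v : V) : G.degree v = k := by
    rw [← hreg v, Nat.card_eq_fintype_card, G.card_neighborSet_eq_degree]
  rw [Nat.card_eq_fintype_card, ← G.edgeFinset_card, ← G.sum_degrees_eq_twice_card_edges]
  simp [hdeg]

theorem odd_regular_approx_magic_general [Finite V] (G : SimpleGraph V)
    (hodd : ∀ v, Odd (Nat.card (G.neighborSet v))) :
    ∃ f : Sym2 V → ℕ, Set.BijOn f G.edgeSet (Set.Icc 1 (Nat.card G.edgeSet)) ∧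
      ∀ u v, Nat.card (G.neighborSet u) ≤ Nat.card (G.neighborSet v) →
        Nat.card (G.neighborSet u) * Nat.card V ≤ 2 * Nat.card G.edgeSet →
        vertexSum G f u ≤ vertexSum G f v + (Nat.card G.edgeSet - 1) := by
  obtain hm | hm := Nat.eq_zero_or_pos (Nat.card G.edgeSet)
  · have hE : G.edgeSet = ∅ := (Set.ncard_eq_zero).1 hm
    exact ⟨0, by simp [hE], by simp [vertexSum]⟩
  set m := Nat.card G.edgeSet
  set n := Nat.card V
  have ht : (m - 1) / n * n < m := (Nat.div_mul_le_self _ _).trans_lt (Nat.sub_one_lt_of_lt hm)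
  obtain ⟨f, hf, hsum⟩ := exists_bijOn_vertexSum_mem_Icc hodd ht
  refine ⟨f, hf, fun u v huv hu => ?_⟩
  have hnonempty : Nonempty V := ⟨u⟩
  have hn : 0 < n := Nat.card_pos
  have htu : Nat.card (G.neighborSet u) / 2 ≤ (m - 1) / n := by
    obtain ⟨s, hs⟩ := hodd u
    have hhalf : Nat.card (G.neighborSet u) / 2 = s := by lia
    rw [Nat.le_div_iff_mul_le hn, hhalf]
    rw [hs] at hu
    lia
  have htm : (m - 1) / n ≤ m := (Nat.div_le_self _ _).trans (Nat.sub_le _ _)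
  calc vertexSum G f u
    _ ≤ m - (m - 1) / n + Nat.card (G.neighborSet u) / 2 * (m + 2) := (hsum u).2
    _ ≤ m + Nat.card (G.neighborSet u) / 2 * (m + 1) := by lia
    _ ≤ m + Nat.card (G.neighborSet v) / 2 * (m + 1) := by gcongr
    _ = 1 + Nat.card (G.neighborSet v) / 2 * (m + 1) + (m - 1) := by lia
    _ ≤ vertexSum G f v + (m - 1) := by grw [(hsum v).1]

/-- A `k`-regular graph on `n` vertices with `k ≥ 1` odd (not necessarily connected)
is `(nk/2 − 1)`-approximately magic. -/
theorem odd_regular_approx_magic {V : Type} [Finite V] {n k : ℕ}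
    (G : SimpleGraph V) (hn : Nat.card V = n)
    (hreg : ∀ v : V, Nat.card (G.neighborSet v) = k)
    (hk1 : 1 ≤ k) (hodd : Odd k) :
    ∃ f : Sym2 V → ℕ,
      Set.BijOn f G.edgeSet (Set.Icc 1 (n * k / 2)) ∧
      ∀ u v : V, vertexSum G f u ≤ vertexSum G f v + (n * k / 2 - 1) := by
  have hm : 2 * Nat.card G.edgeSet = n * k := hn ▸ two_mul_card_edgeSet hreg
  obtain ⟨f, hf, hsum⟩ := odd_regular_approx_magic_general G fun v => hreg v ▸ hodd
  rw [← hm, Nat.mul_div_cancel_left _ two_pos]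
  exact ⟨f, hf, fun u v => hsum u v (by simp [hreg]) (by rw [hreg, hn, hm, mul_comm])⟩
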